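/- arXiv:2502.03491 — 3 statements merged into one kernel-verified Lean document; each statement's English description precedes it below -/
import Mathlib

section
/- Let d ≥ 1, let p : ℝᵈ → ℝ be strictly positive and twice continuously differentiable, let P be a symmetric real d×d matrix, and let m > 0, γ > 0, α ≥ 0. Define ρ(z,v) = p(z) · (2πm)^{-d/2} · exp(−‖v‖²/(2m)) for z, v ∈ ℝᵈ. Then ρ satisfies the stationary Fokker–Planck equation of the preconditioned HFHR underdamped Langevin dynamics dz = ((1/m) P v + α P ∇log p(z)) dt + √(2αP) dW_z, dv = (−(γ/m) P v + P ∇log p(z)) dt + √(2γP) dW_v: for every (z,v), div_z[((1/m) P v + α P ∇log p(z)) ρ(z,v)] + div_v[(−(γ/m) P v + P ∇log p(z)) ρ(z,v)] = α · div_z(P ∇_z ρ(z,v)) + γ · div_v(P ∇_v ρ(z,v)). Hence the stationary distribution is the product p(z) × N(v | 0, m I), in which z follows the target distribution p and v is an independent Gaussian. -/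
open Real Filter MeasureTheory Finset

/-- Partial derivative in the `i`-th coordinate of a scalar function on `Fin d → ℝ`. -/
noncomputable def pd {d : ℕ} (i : Fin d) (f : (Fin d → ℝ) → ℝ) (x : Fin d → ℝ) : ℝ :=
  fderiv ℝ f x (Pi.single i 1)

/-!
A score drift `A ∇log ρ` carries the flux `ρ A ∇log ρ = A ∇ρ`, which is exactly the diffusive flux,
so the dissipative parts of the dynamics drop out. For a product density `ρ = p ⊗ q` the remaining
drift `(-Q ∇log q, Qᵀ ∇log p)` has no divergence and transports `ρ` at the rate
`ρ (-⟨Q ∇log q, ∇log p⟩ + ⟨Qᵀ ∇log p, ∇log q⟩) = 0`. The Gaussian with covariance `m I` has score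
`-v / m`, and a symmetric `P` takes the place of both `Q` and `Qᵀ`.
-/

open Matrix

section VectorCalculus

variable {d : ℕ}

/-- The gradient of a scalar function on `Fin d → ℝ`, as the vector of its partial derivatives. It
stands in for Mathlib's `gradient`, which requires an inner product space. -/
noncomputable def grad (f : (Fin d → ℝ) → ℝ) (x : Fin d → ℝ) : Fin d → ℝ :=
  fun i => pd i f x

/-- The divergence of a vector field on `Fin d → ℝ`, as the sum of the diagonal partial
derivatives. -/
noncomputable def divergence (F : (Fin d → ℝ) → Fin d → ℝ) (x : Fin d → ℝ) : ℝ :=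
  ∑ i, pd i (fun y => F y i) x

theorem pd_const_mul (i : Fin d) (c : ℝ) (f : (Fin d → ℝ) → ℝ) (x : Fin d → ℝ) :
    pd i (fun y => c * f y) x = c * pd i f x :=
  DFunLike.congr_fun (congrFun (fderiv_const_smul_field c) x) (Pi.single i 1)

theorem pd_add (i : Fin d) {f g : (Fin d → ℝ) → ℝ} {x : Fin d → ℝ}
    (hf : DifferentiableAt ℝ f x) (hg : DifferentiableAt ℝ g x) :
    pd i (fun y => f y + g y) x = pd i f x + pd i g x := by
  simp only [pd, fderiv_fun_add hf hg, _root_.add_apply]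

theorem grad_const_mul (c : ℝ) (f : (Fin d → ℝ) → ℝ) :
    grad (fun y => c * f y) = c • grad f :=
  funext₂ fun x i => pd_const_mul i c f x

theorem differentiable_grad {f : (Fin d → ℝ) → ℝ} (hf : ContDiff ℝ 2 f) :
    Differentiable ℝ (grad f) := by
  have hf' : Differentiable ℝ (fderiv ℝ f) :=
    (hf.fderiv_right (m := 1) (by norm_num)).differentiable one_ne_zero
  exact differentiable_pi.2 fun i => hf'.clm_apply (differentiable_const _)

theorem grad_log {f : (Fin d → ℝ) → ℝ} {x : Fin d → ℝ}
    (hf : DifferentiableAt ℝ f x) (hx : f x ≠ 0) :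
    grad (fun y => Real.log (f y)) x = (f x)⁻¹ • grad f x := by
  ext i
  simp only [grad, pd, fderiv.log hf hx, _root_.smul_apply, Pi.smul_apply]

theorem grad_exp {f : (Fin d → ℝ) → ℝ} {x : Fin d → ℝ} (hf : DifferentiableAt ℝ f x) :
    grad (fun y => Real.exp (f y)) x = Real.exp (f x) • grad f x := by
  ext i
  simp only [grad, pd, fderiv_exp hf, _root_.smul_apply, Pi.smul_apply]

theorem grad_sum_sq (x : Fin d → ℝ) :
    grad (fun y : Fin d → ℝ => ∑ i, y i ^ 2) x = (2 : ℝ) • x := by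
  have hsum : HasFDerivAt (fun y : Fin d → ℝ => ∑ i, y i ^ 2)
      (∑ i, (2 * x i) • (ContinuousLinearMap.proj i : (Fin d → ℝ) →L[ℝ] ℝ)) x :=
    HasFDerivAt.fun_sum fun i _ => by
      simpa using HasFDerivAt.pow (hasFDerivAt_apply (𝕜 := ℝ) i x) 2
  ext i
  simp [grad, pd, hsum.fderiv, Pi.single_apply]

theorem divergence_const_smul (c : ℝ) (F : (Fin d → ℝ) → Fin d → ℝ) (x : Fin d → ℝ) :
    divergence (fun y => c • F y) x = c * divergence F x := by
  simp only [divergence, Pi.smul_apply, smul_eq_mul, pd_const_mul, mul_sum]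

theorem divergence_add {F G : (Fin d → ℝ) → Fin d → ℝ} {x : Fin d → ℝ}
    (hF : DifferentiableAt ℝ F x) (hG : DifferentiableAt ℝ G x) :
    divergence (fun y => F y + G y) x = divergence F x + divergence G x := by
  simp only [divergence, Pi.add_apply, ← sum_add_distrib]
  exact sum_congr rfl fun i _ =>
    pd_add i (differentiableAt_pi.1 hF i) (differentiableAt_pi.1 hG i)

theorem divergence_smul_const (f : (Fin d → ℝ) → ℝ) (u x : Fin d → ℝ) :
    divergence (fun y => f y • u) x = u ⬝ᵥ grad f x := by
  simp only [divergence, dotProduct, grad, Pi.smul_apply, smul_eq_mul, mul_comm (f _),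
    pd_const_mul]

end VectorCalculus

/-- `s` is a score `∇log f` of the twice differentiable density `f`. The defining relation is
encoded as `∇f = f s`, which avoids the logarithm and does not require `f` to be positive. -/
structure HasScore {d : ℕ} (f : (Fin d → ℝ) → ℝ) (s : (Fin d → ℝ) → Fin d → ℝ) : Prop where
  differentiable : Differentiable ℝ f
  differentiable_grad : Differentiable ℝ (grad f)
  grad_eq : ∀ x, grad f x = f x • s x

namespace HasScore

variable {d : ℕ} {f : (Fin d → ℝ) → ℝ} {s : (Fin d → ℝ) → Fin d → ℝ}

theorem const_mul (h : HasScore f s) (c : ℝ) : HasScore (fun x => c * f x) s where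
  differentiable := h.differentiable.const_mul c
  differentiable_grad := grad_const_mul c f ▸ h.differentiable_grad.const_smul c
  grad_eq x := by rw [grad_const_mul, Pi.smul_apply, h.grad_eq, smul_smul]

theorem mul_const (h : HasScore f s) (c : ℝ) : HasScore (fun x => f x * c) s := by
  simpa only [mul_comm c] using h.const_mul c

theorem divergence_smul_mulVec_add (h : HasScore f s) (A : Matrix (Fin d) (Fin d) ℝ)
    (u x : Fin d → ℝ) :
    divergence (fun y => f y • (A *ᵥ s y + u)) x =
      divergence (fun y => A *ᵥ grad f y) x + f x * (u ⬝ᵥ s x) := by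
  have hA : Differentiable ℝ fun y => A *ᵥ grad f y :=
    A.mulVecLin.toContinuousLinearMap.differentiable.comp h.differentiable_grad
  calc divergence (fun y => f y • (A *ᵥ s y + u)) x
      = divergence (fun y => A *ᵥ grad f y + f y • u) x := by
        simp only [h.grad_eq, mulVec_smul, smul_add]
    _ = divergence (fun y => A *ᵥ grad f y) x + divergence (fun y => f y • u) x :=
        divergence_add (hA x) ((h.differentiable x).smul_const u)
    _ = divergence (fun y => A *ᵥ grad f y) x + f x * (u ⬝ᵥ s x) := by
        rw [divergence_smul_const, h.grad_eq, dotProduct_smul, smul_eq_mul]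

end HasScore

theorem hasScore_grad_log {d : ℕ} {f : (Fin d → ℝ) → ℝ} (hf : Differentiable ℝ f)
    (hf' : Differentiable ℝ (grad f)) (hf0 : ∀ x, f x ≠ 0) :
    HasScore f (grad fun y => Real.log (f y)) where
  differentiable := hf
  differentiable_grad := hf'
  grad_eq x := by rw [grad_log (hf x) (hf0 x), smul_inv_smul₀ (hf0 x)]

/-- The density of the centered Gaussian on `Fin d → ℝ` with covariance `m I`, for `0 < m`. -/
noncomputable def gaussianDensity {d : ℕ} (m : ℝ) (v : Fin d → ℝ) : ℝ :=
  (2 * π * m) ^ (-(d : ℝ) / 2) * Real.exp (-(∑ i, v i ^ 2) / (2 * m))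

theorem contDiff_gaussianDensity {d : ℕ} (m : ℝ) {n : WithTop ℕ∞} :
    ContDiff ℝ n (gaussianDensity m : (Fin d → ℝ) → ℝ) := by
  unfold gaussianDensity
  fun_prop

theorem grad_gaussianDensity {d : ℕ} (m : ℝ) (v : Fin d → ℝ) :
    grad (gaussianDensity m) v = gaussianDensity m v • -(m⁻¹ • v) := by
  have gaussianDensity_eq : gaussianDensity m = fun w : Fin d → ℝ =>
      (2 * π * m) ^ (-(d : ℝ) / 2) * Real.exp (-(2 * m)⁻¹ * ∑ i, w i ^ 2) := by
    ext w
    rw [gaussianDensity, neg_mul, ← div_eq_inv_mul, ← neg_div]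
  have hquad : DifferentiableAt ℝ (fun w : Fin d → ℝ => -(2 * m)⁻¹ * ∑ i, w i ^ 2) v := by
    fun_prop
  rw [gaussianDensity_eq, grad_const_mul, Pi.smul_apply, grad_exp hquad, grad_const_mul,
    Pi.smul_apply, grad_sum_sq, smul_smul, smul_smul]
  ext i
  simp only [Pi.smul_apply, Pi.neg_apply, smul_eq_mul]
  ring

theorem hasScore_gaussianDensity {d : ℕ} (m : ℝ) :
    HasScore (gaussianDensity m : (Fin d → ℝ) → ℝ) fun v => -(m⁻¹ • v) where
  differentiable := (contDiff_gaussianDensity m).differentiable one_ne_zero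
  differentiable_grad := differentiable_grad (contDiff_gaussianDensity m)
  grad_eq := grad_gaussianDensity m

theorem hfhr_preconditioned_stationary_distribution_general {d e : ℕ}
    {p : (Fin d → ℝ) → ℝ} {s : (Fin d → ℝ) → Fin d → ℝ} (hp : HasScore p s)
    {q : (Fin e → ℝ) → ℝ} {r : (Fin e → ℝ) → Fin e → ℝ} (hq : HasScore q r)
    (A : Matrix (Fin d) (Fin d) ℝ) (B : Matrix (Fin e) (Fin e) ℝ) (Q : Matrix (Fin d) (Fin e) ℝ)
    (z : Fin d → ℝ) (v : Fin e → ℝ) :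
    divergence (fun z' => (p z' * q v) • (A *ᵥ s z' + -(Q *ᵥ r v))) z
        + divergence (fun v' => (p z * q v') • (B *ᵥ r v' + Qᵀ *ᵥ s z)) v
      = divergence (fun z' => A *ᵥ grad (fun z'' => p z'' * q v) z') z
        + divergence (fun v' => B *ᵥ grad (fun v'' => p z * q v'') v') v := by
  have transport_cancel : -(Q *ᵥ r v) ⬝ᵥ s z + (Qᵀ *ᵥ s z) ⬝ᵥ r v = 0 := by
    rw [neg_dotProduct, mulVec_transpose, ← dotProduct_mulVec, dotProduct_comm, neg_add_cancel]
  rw [(hp.mul_const (q v)).divergence_smul_mulVec_add,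
    (hq.const_mul (p z)).divergence_smul_mulVec_add]
  linear_combination p z * q v * transport_cancel

/-- The product density `ρ(z,v) = p(z) ⬝ N(v | 0, m I)` satisfies the
stationary Fokker–Planck equation of the preconditioned HFHR underdamped Langevin dynamics
`dz = ((1/m) P v + α P ∇log p(z)) dt + √(2αP) dW_z`,
`dv = (−(γ/m) P v + P ∇log p(z)) dt + √(2γP) dW_v`:
`div_z[((1/m)Pv + αP∇log p)ρ] + div_v[(−(γ/m)Pv + P∇log p)ρ]
  = α div_z(P ∇_z ρ) + γ div_v(P ∇_v ρ)`,
hence the stationary distribution is `p(z) × N(v | 0, m I)`. -/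
theorem hfhr_preconditioned_stationary_distribution
    (d : ℕ) (hd : 1 ≤ d)
    (p : (Fin d → ℝ) → ℝ)
    (hp_pos : ∀ z, 0 < p z)
    (hp_smooth : ContDiff ℝ 2 p)
    (P : Matrix (Fin d) (Fin d) ℝ) (hP : P.IsSymm)
    (m γ α : ℝ) (hm : 0 < m) (hγ : 0 < γ) (hα : 0 ≤ α)
    (ρ : (Fin d → ℝ) → (Fin d → ℝ) → ℝ)
    (hρ : ∀ z v, ρ z v =
      p z * (2 * π * m) ^ (-(d : ℝ) / 2) * Real.exp (-(∑ i, v i ^ 2) / (2 * m)))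
    (slog : (Fin d → ℝ) → (Fin d → ℝ))
    (hslog : ∀ z i, slog z i = pd i (fun z' => Real.log (p z')) z) :
    ∀ z v : Fin d → ℝ,
      (∑ i, pd i
          (fun z' => ((1 / m) * P.mulVec v i + α * P.mulVec (slog z') i) * ρ z' v) z)
        + (∑ i, pd i
            (fun v' => (-(γ / m) * P.mulVec v' i + P.mulVec (slog z) i) * ρ z v') v)
      = α * (∑ i, pd i (fun z' => ∑ j, P i j * pd j (fun z'' => ρ z'' v) z') z)
        + γ * (∑ i, pd i (fun v' => ∑ j, P i j * pd j (fun v'' => ρ z v'') v') v) := by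
  intro z v
  have hp : HasScore p slog :=
    funext₂ hslog ▸ hasScore_grad_log (hp_smooth.differentiable two_ne_zero)
      (differentiable_grad hp_smooth) fun z => (hp_pos z).ne'
  obtain rfl : ρ = fun z v => p z * gaussianDensity m v :=
    funext₂ fun z v => (hρ z v).trans (mul_assoc _ _ _)
  have stationary := hfhr_preconditioned_stationary_distribution_general
    hp (hasScore_gaussianDensity m) (α • P) (γ • P) P z v
  have drift_z (z' : Fin d → ℝ) : α • (P *ᵥ slog z') + -(P *ᵥ -(m⁻¹ • v)) =
      (1 / m) • (P *ᵥ v) + α • (P *ᵥ slog z') := by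
    rw [mulVec_neg, mulVec_smul, neg_neg, one_div, add_comm]
  have drift_v (v' : Fin d → ℝ) : γ • (P *ᵥ -(m⁻¹ • v')) + Pᵀ *ᵥ slog z =
      -(γ / m) • (P *ᵥ v') + P *ᵥ slog z := by
    rw [mulVec_neg, mulVec_smul, smul_neg, smul_smul, hP.eq, neg_smul, div_eq_mul_inv]
  simp only [smul_mulVec, divergence_const_smul, drift_z, drift_v] at stationary
  simp only [mul_comm _ (p _ * _)]
  exact stationary
end

section
/- Let Γ > 0 and A ∈ ℝ with 0 < A < Γ/4, so that Δ := 1 − 4A/Γ ∈ (0,1); set δ := √Δ. Let x₀, q₀, C ∈ ℝ and define, for u = Γτ, the auxiliary functions ζ₁(u, Δ) = 1 − [1 − e^{−u/2}(sinh(uδ/2)/δ + cosh(uδ/2))] / (u(1 − Δ)/4) and ζ₂(u, Δ) = 2 e^{−u/2} sinh(uδ/2)/(uδ). Then the function defined for τ > 0 by x(τ) = x₀ + [q₀ ζ₂(Γτ, Δ) + (C − A x₀)(1 − ζ₁(Γτ, Δ))] τ coincides with the closed form x(τ) = C/A + (x₀ − C/A) e^{−Γτ/2}(cosh(Γτδ/2)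 + sinh(Γτδ/2)/δ) + (2 q₀/(Γδ)) e^{−Γτ/2} sinh(Γτδ/2), and this function extends continuously to τ = 0 with x(0) = x₀, is twice differentiable, satisfies x'(0) = q₀, and solves the damped harmonic oscillator equation x''(τ) + Γ x'(τ) + Γ A x(τ) = Γ C for all τ ≥ 0. That is, it is the mean of the exact solution of the FLD equation over a step in which C is held constant. -/
open Real Filter

/-!
Both coefficients `ζ₁`, `ζ₂` carry a factor `1/u`, which the factor `τ` of the solver step cancels
at `u = Γτ`. What remains is the equilibrium `C/A` plus a combination of `exp (αt) cosh (ωt)` and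
`exp (αt) sinh (ωt)` with `α = -Γ/2` and `ω = Γδ/2`. On such combinations the operator `d/dt - α`
swaps the two amplitudes and scales them by `ω`, so its square is `ω²`, which is the equation
`y'' - 2αy' + (α² - ω²)y = 0`; here `α² - ω² = Γ²(1 - Δ)/4 = ΓA`.
-/

/-- The real modes of a linear second-order equation with characteristic roots `α ± ω`, in the
hyperbolic basis, with amplitudes `a` and `b`. -/
noncomputable def hyperbolicMode (α ω a b t : ℝ) : ℝ :=
  exp (α * t) * (a * cosh (ω * t) + b * sinh (ω * t))

section HyperbolicMode

variable (α ω a b t : ℝ)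

theorem hyperbolicMode_zero : hyperbolicMode α ω a b 0 = a := by
  simp [hyperbolicMode]

theorem hasDerivAt_hyperbolicMode :
    HasDerivAt (hyperbolicMode α ω a b)
      (hyperbolicMode α ω (α * a + ω * b) (α * b + ω * a) t) t := by
  have hlin (k : ℝ) : HasDerivAt (fun s : ℝ ↦ k * s) k t := by
    simpa using (hasDerivAt_id t).const_mul k
  have hosc := ((hlin ω).cosh.const_mul a).add ((hlin ω).sinh.const_mul b)
  refine ((hlin α).exp.mul hosc).congr_deriv ?_
  simp only [hyperbolicMode, Pi.add_apply]
  ring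

theorem deriv_hyperbolicMode :
    deriv (hyperbolicMode α ω a b) = hyperbolicMode α ω (α * a + ω * b) (α * b + ω * a) :=
  funext fun t ↦ (hasDerivAt_hyperbolicMode α ω a b t).deriv

theorem differentiable_hyperbolicMode : Differentiable ℝ (hyperbolicMode α ω a b) :=
  fun t ↦ (hasDerivAt_hyperbolicMode α ω a b t).differentiableAt

theorem deriv_deriv_hyperbolicMode :
    deriv (deriv (hyperbolicMode α ω a b)) t =
      2 * α * deriv (hyperbolicMode α ω a b) t - (α ^ 2 - ω ^ 2) * hyperbolicMode α ω a b t := by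
  simp only [deriv_hyperbolicMode, hyperbolicMode]
  ring

end HyperbolicMode

/-- The solution of `x'' - 2αx' + (α² - ω²)(x - c) = 0` with equilibrium `c`, initial position `x₀`
and initial velocity `v₀`. It requires `ω ≠ 0`: at `ω = 0` the division drops the initial
velocity. -/
noncomputable def overdampedSolution (α ω c x₀ v₀ t : ℝ) : ℝ :=
  c + hyperbolicMode α ω (x₀ - c) ((v₀ - α * (x₀ - c)) / ω) t

section OverdampedSolution

variable (α ω c x₀ v₀ t : ℝ)

theorem overdampedSolution_zero : overdampedSolution α ω c x₀ v₀ 0 = x₀ := by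
  rw [overdampedSolution, hyperbolicMode_zero, add_sub_cancel]

theorem deriv_overdampedSolution :
    deriv (overdampedSolution α ω c x₀ v₀) =
      deriv (hyperbolicMode α ω (x₀ - c) ((v₀ - α * (x₀ - c)) / ω)) :=
  deriv_const_add' c

theorem differentiable_overdampedSolution : Differentiable ℝ (overdampedSolution α ω c x₀ v₀) :=
  (differentiable_hyperbolicMode α ω _ _).const_add c

theorem differentiable_deriv_overdampedSolution :
    Differentiable ℝ (deriv (overdampedSolution α ω c x₀ v₀)) := by
  rw [deriv_overdampedSolution, deriv_hyperbolicMode]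
  exact differentiable_hyperbolicMode α ω _ _

theorem deriv_overdampedSolution_zero {ω : ℝ} (hω : ω ≠ 0) :
    deriv (overdampedSolution α ω c x₀ v₀) 0 = v₀ := by
  rw [deriv_overdampedSolution, deriv_hyperbolicMode, hyperbolicMode_zero,
    mul_div_cancel₀ _ hω, add_sub_cancel]

theorem overdampedSolution_equation :
    deriv (deriv (overdampedSolution α ω c x₀ v₀)) t
        - 2 * α * deriv (overdampedSolution α ω c x₀ v₀) t
        + (α ^ 2 - ω ^ 2) * overdampedSolution α ω c x₀ v₀ t = (α ^ 2 - ω ^ 2) * c := by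
  rw [deriv_overdampedSolution, deriv_deriv_hyperbolicMode, overdampedSolution]
  ring

end OverdampedSolution

/-- The function `ζ₁(u, Δ)` of the FLD solver: over a step of rescaled length `u = Γτ`, the mean
displacement caused by the initial force `F` is `F (1 - ζ₁) τ`. The divisions are proper for
`u ≠ 0`, `0 < Δ` and `Δ ≠ 1`. -/
noncomputable def fldZeta₁ (u Δ : ℝ) : ℝ :=
  1 - (1 - exp (-u / 2) * (sinh (u * √Δ / 2) / √Δ + cosh (u * √Δ / 2))) / (u * (1 - Δ) / 4)

/-- The function `ζ₂(u, Δ)` of the FLD solver: over a step of rescaled length `u = Γτ`, the mean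
displacement caused by the initial velocity `q₀` is `q₀ ζ₂ τ`. The divisions are proper for
`u ≠ 0` and `0 < Δ`. -/
noncomputable def fldZeta₂ (u Δ : ℝ) : ℝ :=
  2 * exp (-u / 2) * sinh (u * √Δ / 2) / (u * √Δ)

section FLD

variable {Γ A Δ u τ : ℝ}

theorem one_sub_fldZeta₁_mul (hu : u ≠ 0) (hΔ : Δ ≠ 1) :
    (1 - fldZeta₁ u Δ) * (u * (1 - Δ) / 4) =
      1 - exp (-u / 2) * (sinh (u * √Δ / 2) / √Δ + cosh (u * √Δ / 2)) := by
  have hden : u * (1 - Δ) / 4 ≠ 0 :=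
    div_ne_zero (mul_ne_zero hu (sub_ne_zero.mpr hΔ.symm)) four_ne_zero
  rw [fldZeta₁, sub_sub_cancel, div_mul_cancel₀ _ hden]

theorem fldZeta₂_mul (hu : u ≠ 0) :
    fldZeta₂ u Δ * u = 2 * exp (-u / 2) * sinh (u * √Δ / 2) / √Δ := by
  rw [fldZeta₂, mul_comm u √Δ, ← div_div, div_mul_cancel₀ _ hu]

theorem overdampedSolution_eq_closed_form (hΓ : Γ ≠ 0) (δ c x₀ q₀ τ : ℝ) :
    overdampedSolution (-Γ / 2) (Γ * δ / 2) c x₀ q₀ τ =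
      c + (x₀ - c) * exp (-Γ * τ / 2) * (cosh (Γ * τ * δ / 2) + sinh (Γ * τ * δ / 2) / δ)
        + 2 * q₀ / (Γ * δ) * exp (-Γ * τ / 2) * sinh (Γ * τ * δ / 2) := by
  have hdecay : -Γ / 2 * τ = -Γ * τ / 2 := by ring
  have hphase : Γ * δ / 2 * τ = Γ * τ * δ / 2 := by ring
  have hamp : (q₀ - -Γ / 2 * (x₀ - c)) / (Γ * δ / 2) = (x₀ - c) / δ + 2 * q₀ / (Γ * δ) := by
    field_simp
    ring
  rw [overdampedSolution, hyperbolicMode, hdecay, hphase, hamp]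
  ring

theorem fld_mean_eq_closed_form (hΓ : Γ ≠ 0) (hA : A ≠ 0) (hΔ : Δ = 1 - 4 * A / Γ) (hτ : τ ≠ 0)
    (x₀ q₀ C : ℝ) :
    x₀ + (q₀ * fldZeta₂ (Γ * τ) Δ + (C - A * x₀) * (1 - fldZeta₁ (Γ * τ) Δ)) * τ =
      C / A + (x₀ - C / A) * exp (-Γ * τ / 2)
          * (cosh (Γ * τ * √Δ / 2) + sinh (Γ * τ * √Δ / 2) / √Δ)
        + 2 * q₀ / (Γ * √Δ) * exp (-Γ * τ / 2) * sinh (Γ * τ * √Δ / 2) := by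
  have hu : Γ * τ ≠ 0 := mul_ne_zero hΓ hτ
  have hgap : Γ * (1 - Δ) / 4 = A := by
    rw [hΔ]
    field_simp
    ring
  have hΔ_ne : Δ ≠ 1 := by
    rintro rfl
    exact hA (by simpa using hgap.symm)
  have hforce := one_sub_fldZeta₁_mul hu hΔ_ne
  have hvelocity := fldZeta₂_mul (Δ := Δ) hu
  have hscale : Γ * τ * (1 - Δ) / 4 = A * τ := by rw [← hgap]; ring
  have hdecay : -(Γ * τ) / 2 = -Γ * τ / 2 := by ring
  rw [hscale, hdecay] at hforce
  rw [hdecay] at hvelocity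
  calc
    _ = x₀ + q₀ / Γ * (fldZeta₂ (Γ * τ) Δ * (Γ * τ))
          + (C / A - x₀) * ((1 - fldZeta₁ (Γ * τ) Δ) * (A * τ)) := by
      field_simp
      ring
    _ = _ := by
      rw [hforce, hvelocity]
      ring

end FLD

theorem fld_solver_mean_closed_form_general
    (Γ A : ℝ) (hΓ : Γ ≠ 0) (hA : A ≠ 0)
    (Δ δ : ℝ) (hΔ : Δ = 1 - 4 * A / Γ) (hΔ_pos : 0 < Δ) (hδ : δ = √Δ)
    (x₀ q₀ C : ℝ)
    (ζ₁ ζ₂ : ℝ → ℝ)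
    (hζ₁ : ∀ u, ζ₁ u = 1 -
      (1 - exp (-u / 2) * (sinh (u * δ / 2) / δ + cosh (u * δ / 2))) / (u * (1 - Δ) / 4))
    (hζ₂ : ∀ u, ζ₂ u = 2 * exp (-u / 2) * sinh (u * δ / 2) / (u * δ))
    (xμ xcf : ℝ → ℝ)
    (hxμ : ∀ τ, xμ τ = x₀ + (q₀ * ζ₂ (Γ * τ) + (C - A * x₀) * (1 - ζ₁ (Γ * τ))) * τ)
    (hxcf : ∀ τ, xcf τ =
      C / A + (x₀ - C / A) * exp (-Γ * τ / 2) * (cosh (Γ * τ * δ / 2) + sinh (Γ * τ * δ / 2) / δ)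
        + (2 * q₀ / (Γ * δ)) * exp (-Γ * τ / 2) * sinh (Γ * τ * δ / 2)) :
    (∀ τ ≠ 0, xμ τ = xcf τ) ∧
    xcf 0 = x₀ ∧
    Tendsto xμ (nhdsWithin 0 {0}ᶜ) (nhds x₀) ∧
    Differentiable ℝ xcf ∧
    Differentiable ℝ (deriv xcf) ∧
    deriv xcf 0 = q₀ ∧
    ∀ τ, deriv (deriv xcf) τ + Γ * deriv xcf τ + Γ * A * xcf τ = Γ * C := by
  subst hδ
  obtain rfl : ζ₁ = (fldZeta₁ · Δ) := funext hζ₁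
  obtain rfl : ζ₂ = (fldZeta₂ · Δ) := funext hζ₂
  have hmean : ∀ τ ≠ 0, xμ τ = xcf τ := fun τ hτ ↦ by
    rw [hxμ, hxcf, fld_mean_eq_closed_form hΓ hA hΔ hτ]
  obtain rfl : xcf = overdampedSolution (-Γ / 2) (Γ * √Δ / 2) (C / A) x₀ q₀ :=
    funext fun τ ↦ (hxcf τ).trans (overdampedSolution_eq_closed_form hΓ _ _ _ _ τ).symm
  have hdiff := differentiable_overdampedSolution (-Γ / 2) (Γ * √Δ / 2) (C / A) x₀ q₀
  have hzero := overdampedSolution_zero (-Γ / 2) (Γ * √Δ / 2) (C / A) x₀ q₀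
  have hω : Γ * √Δ / 2 ≠ 0 := by positivity
  have hstiffness : (-Γ / 2) ^ 2 - (Γ * √Δ / 2) ^ 2 = Γ * A := by
    rw [div_pow, div_pow, mul_pow, sq_sqrt hΔ_pos.le, hΔ]
    field_simp
    ring
  refine ⟨hmean, hzero, ?_, hdiff, differentiable_deriv_overdampedSolution _ _ _ _ _,
    deriv_overdampedSolution_zero _ _ _ _ hω, fun τ ↦ ?_⟩
  · have hlim := (hdiff 0).continuousAt.continuousWithinAt (s := {0}ᶜ) |>.tendsto
    rw [hzero] at hlim
    exact hlim.congr' (eventually_nhdsWithin_of_forall fun τ hτ ↦ (hmean τ hτ).symm)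
  · have hode := overdampedSolution_equation (-Γ / 2) (Γ * √Δ / 2) (C / A) x₀ q₀ τ
    rw [hstiffness, mul_assoc Γ A (C / A), mul_div_cancel₀ C hA] at hode
    linear_combination hode

/-- In the overdamped regime `0 < A < Γ/4` (so `Δ = 1 − 4A/Γ ∈ (0,1)`,
`δ = √Δ`), the mean `x(τ) = x₀ + [q₀ ζ₂(Γτ,Δ) + (C − A x₀)(1 − ζ₁(Γτ,Δ))] τ` of the
exact FLD solver step coincides for `τ > 0` with the closed form
`x(τ) = C/A + (x₀ − C/A) e^{−Γτ/2}(cosh(Γτδ/2) + sinh(Γτδ/2)/δ)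
        + (2q₀/(Γδ)) e^{−Γτ/2} sinh(Γτδ/2)`,
which extends continuously to `τ = 0` with value `x₀`, is twice differentiable, has
`x'(0) = q₀`, and solves `x'' + Γ x' + Γ A x = Γ C` for all `τ ≥ 0`. -/
theorem fld_solver_mean_closed_form
    (Γ A : ℝ) (hΓ : 0 < Γ) (hA₀ : 0 < A) (hA : A < Γ / 4)
    (Δ δ : ℝ) (hΔ : Δ = 1 - 4 * A / Γ) (hδ : δ = Real.sqrt Δ)
    (x₀ q₀ C : ℝ)
    (ζ₁ ζ₂ : ℝ → ℝ)
    (hζ₁ : ∀ u, ζ₁ u = 1 -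
      (1 - Real.exp (-u / 2) * (Real.sinh (u * δ / 2) / δ + Real.cosh (u * δ / 2)))
        / (u * (1 - Δ) / 4))
    (hζ₂ : ∀ u, ζ₂ u = 2 * Real.exp (-u / 2) * Real.sinh (u * δ / 2) / (u * δ))
    (xμ xcf : ℝ → ℝ)
    (hxμ : ∀ τ, xμ τ =
      x₀ + (q₀ * ζ₂ (Γ * τ) + (C - A * x₀) * (1 - ζ₁ (Γ * τ))) * τ)
    (hxcf : ∀ τ, xcf τ =
      C / A
        + (x₀ - C / A) * Real.exp (-Γ * τ / 2)
            * (Real.cosh (Γ * τ * δ / 2) + Real.sinh (Γ * τ * δ / 2) / δ)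
        + (2 * q₀ / (Γ * δ)) * Real.exp (-Γ * τ / 2) * Real.sinh (Γ * τ * δ / 2)) :
    (∀ τ > (0 : ℝ), xμ τ = xcf τ) ∧
    xcf 0 = x₀ ∧
    Tendsto xμ (nhdsWithin 0 (Set.Ioi 0)) (nhds x₀) ∧
    (∀ τ : ℝ, DifferentiableAt ℝ xcf τ) ∧
    (∀ τ : ℝ, DifferentiableAt ℝ (deriv xcf) τ) ∧
    deriv xcf 0 = q₀ ∧
    (∀ τ ≥ (0 : ℝ),
      deriv (deriv xcf) τ + Γ * deriv xcf τ + Γ * A * xcf τ = Γ * C) := by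
  have hΔ_pos : 0 < Δ := by rw [hΔ, sub_pos, div_lt_one hΓ]; linarith
  obtain ⟨hmean, hzero, hlim, hdiff, hdiff', hvel, hode⟩ :=
    fld_solver_mean_closed_form_general Γ A hΓ.ne' hA₀.ne' Δ δ hΔ hΔ_pos hδ x₀ q₀ C
      ζ₁ ζ₂ hζ₁ hζ₂ xμ xcf hxμ hxcf
  exact ⟨fun τ hτ ↦ hmean τ hτ.ne', hzero, hlim.mono_left (nhdsGT_le_nhdsNE 0),
    hdiff, hdiff', hvel, fun τ _ ↦ hode τ⟩
end

section
/- Let d ≥ 1 and T > 0, let s : ℝᵈ × (0, T] → ℝᵈ be continuous (the score function), and define ᾱ(t) = e^{−t} and σ(t) = √(e^{t} − 1) for t ∈ (0, T]. Suppose x : (0, T] → ℝᵈ is differentiable and satisfies the variance-preserving probability-flow ODE x'(t) = −(1/2)(x(t) + s(x(t), t)). Define the VE noise-prediction function ε(z, σ) := −√(1 − ᾱ(t(σ))) · s(√(ᾱ(t(σ))) z, t(σ)) with t(σ) = log(1 + σ²), and the transformed trajectory z(σ) := √(1 + σ²) · x(log(1 + σ²)) for σ ∈ (0, σ(T)]. Then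 z is differentiable and satisfies the variance-exploding backward ODE dz/dσ = ε(z(σ), σ). Hence the VP probability-flow ODE and the VE backward ODE are equivalent under the change of variables σ = √((1 − ᾱ)/ᾱ), z = x/√ᾱ. -/
open Real Filter Set

/-! The function `e^{t/2}` is an integrating factor for the linear drift `-x/2`: along a solution of
the VP equation, `(e^{t/2} x)' = -e^{t/2} s(x, t) / 2`. Since `z(σ) = e^{t/2} x(t)` at
`t = log (1 + σ²)`, multiplying by `dt/dσ = 2σ / (1 + σ²)` leaves `z' = -(σ / √(1 + σ²)) s(x, t)`,
where `σ / √(1 + σ²) = √(1 - ᾱ)` because `ᾱ = 1 / (1 + σ²)`. -/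

/-- The diffusion time `t(σ)` at noise scale `σ`, inverse to `σ(t) = √(e^t - 1)` on `σ ≥ 0`. -/
noncomputable def vpTime (σ : ℝ) : ℝ := log (1 + σ ^ 2)

lemma exp_vpTime (σ : ℝ) : exp (vpTime σ) = 1 + σ ^ 2 :=
  exp_log (by positivity)

lemma sqrt_exp_neg_vpTime (σ : ℝ) : √(exp (-vpTime σ)) = (√(1 + σ ^ 2))⁻¹ := by
  rw [exp_neg, exp_vpTime, sqrt_inv]

lemma sqrt_one_sub_exp_neg_vpTime {σ : ℝ} (hσ : 0 ≤ σ) :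
    √(1 - exp (-vpTime σ)) = σ / √(1 + σ ^ 2) := by
  have hone_sub : 1 - exp (-vpTime σ) = σ ^ 2 / (1 + σ ^ 2) := by
    rw [exp_neg, exp_vpTime]
    field_simp
    ring
  rw [hone_sub, sqrt_div (sq_nonneg σ), sqrt_sq hσ]

lemma vpTime_mem_Ioc {T σ : ℝ} (hσ : σ ∈ Ioc 0 √(exp T - 1)) : vpTime σ ∈ Ioc 0 T := by
  have hσT : σ ^ 2 ≤ exp T - 1 := (le_sqrt' hσ.1).1 hσ.2
  constructor
  · exact log_pos (lt_add_of_pos_right 1 (pow_pos hσ.1 2))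
  · rw [← exp_le_exp, exp_vpTime]
    linarith

lemma hasDerivAt_vpTime (σ : ℝ) : HasDerivAt vpTime (2 * σ / (1 + σ ^ 2)) σ := by
  have hone_add_sq : HasDerivAt (fun τ : ℝ => 1 + τ ^ 2) (2 * σ) σ := by
    simpa using (hasDerivAt_pow 2 σ).const_add 1
  exact hone_add_sq.log (by positivity)

section NormedSpace

variable {E : Type*} [NormedAddCommGroup E] [NormedSpace ℝ E]

lemma hasDerivAt_exp_mul_smul (c : ℝ) {x : ℝ → E} {x' : E} {t : ℝ} (hx : HasDerivAt x x' t) :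
    HasDerivAt (fun u => exp (c * u) • x u) (exp (c * t) • (x' + c • x t)) t := by
  have hexp : HasDerivAt (fun u => exp (c * u)) (exp (c * t) * c) t := by
    simpa using ((hasDerivAt_id t).const_mul c).exp
  exact (hexp.smul hx).congr_deriv (by module)

/-- The trajectory `z = x / √ᾱ` of `x` in VE coordinates, as a function of the noise scale;
`√(1 + σ ^ 2)` is `1 / √ᾱ` at the time `vpTime σ`. -/
noncomputable def veTrajectory (x : ℝ → E) (σ : ℝ) : E := √(1 + σ ^ 2) • x (vpTime σ)

/-- The VE noise prediction `ε(z, σ) = -√(1 - ᾱ) s(√ᾱ z, t)` associated with the score `s`, where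
`ᾱ = e^{-t}` at the time `t = vpTime σ`. -/
noncomputable def noisePrediction (s : E → ℝ → E) (z : E) (σ : ℝ) : E :=
  -√(1 - exp (-vpTime σ)) • s (√(exp (-vpTime σ)) • z) (vpTime σ)

lemma veTrajectory_eq_comp (x : ℝ → E) :
    veTrajectory x = (fun t => exp (1 / 2 * t) • x t) ∘ vpTime := by
  funext σ
  rw [Function.comp_apply, one_div_mul_eq_div, exp_half, exp_vpTime, veTrajectory]

lemma hasDerivAt_veTrajectory {x : ℝ → E} {x' : E} {σ : ℝ} (hx : HasDerivAt x x' (vpTime σ)) :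
    HasDerivAt (veTrajectory x)
      ((2 * σ / √(1 + σ ^ 2)) • (x' + (1 / 2 : ℝ) • x (vpTime σ))) σ := by
  have hcoeff : 2 * σ / (1 + σ ^ 2) * exp (1 / 2 * vpTime σ) = 2 * σ / √(1 + σ ^ 2) := by
    rw [one_div_mul_eq_div, exp_half, exp_vpTime, div_mul_eq_mul_div, mul_div_assoc, sqrt_div_self',
      mul_one_div]
  rw [veTrajectory_eq_comp, ← hcoeff, mul_smul]
  exact (hasDerivAt_exp_mul_smul (1 / 2) hx).scomp σ (hasDerivAt_vpTime σ)

lemma noisePrediction_veTrajectory (s : E → ℝ → E) (x : ℝ → E) {σ : ℝ} (hσ : 0 ≤ σ) :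
    noisePrediction s (veTrajectory x σ) σ =
      -(σ / √(1 + σ ^ 2)) • s (x (vpTime σ)) (vpTime σ) := by
  have hsqrt : √(1 + σ ^ 2) ≠ 0 := by positivity
  rw [noisePrediction, veTrajectory, sqrt_one_sub_exp_neg_vpTime hσ, sqrt_exp_neg_vpTime,
    inv_smul_smul₀ hsqrt]

theorem vp_ode_to_ve_ode_general {s : E → ℝ → E} {x : ℝ → E} {σ : ℝ} (hσ : 0 ≤ σ)
    (hx : HasDerivAt x (-(1 / 2 : ℝ) • (x (vpTime σ) + s (x (vpTime σ)) (vpTime σ))) (vpTime σ)) :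
    HasDerivAt (veTrajectory x) (noisePrediction s (veTrajectory x σ) σ) σ := by
  rw [noisePrediction_veTrajectory s x hσ]
  have hdrift : -(1 / 2 : ℝ) • (x (vpTime σ) + s (x (vpTime σ)) (vpTime σ)) +
      (1 / 2 : ℝ) • x (vpTime σ) = -(1 / 2 : ℝ) • s (x (vpTime σ)) (vpTime σ) := by
    module
  refine (hasDerivAt_veTrajectory hx).congr_deriv ?_
  rw [hdrift, smul_smul]
  congr 1
  ring

end NormedSpace

/-- If `x` solves the variance-preserving probability-flow ODE
`x'(t) = −(1/2)(x(t) + s(x(t), t))` on `(0, T]` with `ᾱ(t) = e^{−t}`, then the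
transformed trajectory `z(σ) = √(1+σ²) x(log(1+σ²))` solves the variance-exploding
backward ODE `dz/dσ = ε(z(σ), σ)` on `(0, σ(T)]` with `σ(T) = √(e^T − 1)`, where
`ε(z, σ) = −√(1 − ᾱ(t(σ))) s(√(ᾱ(t(σ))) z, t(σ))` and `t(σ) = log(1+σ²)`.  Hence the
VP probability-flow ODE and the VE backward ODE are equivalent under the change of
variables `σ = √((1−ᾱ)/ᾱ)`, `z = x/√ᾱ`. -/
theorem vp_ode_to_ve_ode
    (d : ℕ) (hd : 1 ≤ d) (T : ℝ) (hT : 0 < T)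
    (s : (Fin d → ℝ) → ℝ → (Fin d → ℝ))
    (hs : ContinuousOn (fun p : (Fin d → ℝ) × ℝ => s p.1 p.2)
      (Set.univ ×ˢ Set.Ioc 0 T))
    (x : ℝ → (Fin d → ℝ))
    (hx : ∀ t ∈ Set.Ioc (0 : ℝ) T,
      HasDerivAt x (-(1 / 2 : ℝ) • (x t + s (x t) t)) t)
    (ᾱ : ℝ → ℝ) (hᾱ : ∀ t, ᾱ t = Real.exp (-t))
    (tof : ℝ → ℝ) (htof : ∀ σ, tof σ = Real.log (1 + σ ^ 2))
    (ε : (Fin d → ℝ) → ℝ → (Fin d → ℝ))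
    (hε : ∀ zz σ, ε zz σ =
      -Real.sqrt (1 - ᾱ (tof σ)) • s (Real.sqrt (ᾱ (tof σ)) • zz) (tof σ))
    (z : ℝ → (Fin d → ℝ))
    (hz : ∀ σ, z σ = Real.sqrt (1 + σ ^ 2) • x (Real.log (1 + σ ^ 2))) :
    ∀ σ ∈ Set.Ioc (0 : ℝ) (Real.sqrt (Real.exp T - 1)),
      HasDerivAt z (ε (z σ) σ) σ := by
  obtain rfl : z = veTrajectory x := funext hz
  obtain rfl : ε = noisePrediction s := funext₂ fun zz σ => by rw [hε, hᾱ, htof]; rfl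
  exact fun σ hσ => vp_ode_to_ve_ode_general hσ.1.le (hx _ (vpTime_mem_Ioc hσ))
end
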